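/- Let φ(x,y,t,ξ) be a real-valued function, smooth for ξ ∈ ℝ^n ∖ {0}, which is positively homogeneous of degree one in ξ. Suppose that at a point (x₀,y₀,t₀,ξ₀) with ξ₀ ≠ 0 and ∇_ξ φ = 0 one has ⟨ξ₀/|ξ₀|, ∇_ξ⟩ ∂_t φ ≠ 0 and the ξ-Hessian (∂²φ/∂ξ_j∂ξ_k) has rank n − 1. Then the function Φ(x,y,t,ξ) = φ(x,y,t,ξ) + t satisfies det( ∂²Φ/∂(t,ξ)∂(t,ξ) ) ≠ 0 at (x₀,y₀,t₀,ξ₀), where ∂²Φ/∂(t,ξ)∂(t,ξ) is the (n+1)×(n+1) Hessian of Φ in the variables (t,ξ). -/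

import Mathlib

/-!
The stationary-phase Hessian computation in the proof of Lemma 2.2: if
`φ(x,y,t,ξ)` is real, smooth for `ξ ≠ 0`, positively homogeneous of degree one in `ξ`,
and if at a point `(x₀,y₀,t₀,ξ₀)` with `ξ₀ ≠ 0` one has `∇_ξ φ = 0`,
`⟨ξ₀/|ξ₀|, ∇_ξ⟩ ∂_t φ ≠ 0`, and the `ξ`-Hessian of `φ` has rank `n-1`, then
`Φ(x,y,t,ξ) = φ(x,y,t,ξ) + t` has nondegenerate `(t,ξ)`-Hessian at that point.
-/

open Set

noncomputable section

/-- Coordinate basis of `ℝ × ℝ^n` indexed by `Fin (n+1)`: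
`b 0 = (1,0)` (the `t`-direction) and `b (j+1) = (0, e_j)` (the `ξ_j`-directions). -/
def txBasis (n : ℕ) : Fin (n + 1) → ℝ × EuclideanSpace ℝ (Fin n) :=
  fun i => Fin.cases (motive := fun _ => ℝ × EuclideanSpace ℝ (Fin n))
    ((1 : ℝ), 0) (fun j => ((0 : ℝ), EuclideanSpace.single j 1)) i

/-!
Differentiating the degree-one homogeneity once shows that `∇_ξ φ` is constant along rays, so `ξ₀`
spans the kernel of the `ξ`-Hessian `H`, which has corank one. The `(t, ξ)`-Hessian of `φ + t` is
that of `φ`: it is `H` bordered by the row and column `b = ∇_ξ ∂_t φ`. If it annihilates `(τ, η)`,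
then pairing `τ b + H η = 0` with `ξ₀` gives `τ ⟨b, ξ₀⟩ = 0`, hence `τ = 0` and `η = a ξ₀`, and the
first row gives `a ⟨b, ξ₀⟩ = 0`, hence `a = 0`.
-/

open Filter Matrix Topology
open scoped ContDiff

section BorderedMatrix

variable {K : Type*} [Field K]

lemma exists_eq_smul_of_mulVec_eq_zero {m ι : Type*} [Fintype ι] {A : Matrix m ι K}
    (hA : Fintype.card ι ≤ A.rank + 1) {u v : ι → K} (hu : A *ᵥ u = 0) (hu₀ : u ≠ 0)
    (hv : A *ᵥ v = 0) : ∃ a : K, v = a • u := by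
  let u' : LinearMap.ker A.mulVecLin := ⟨u, hu⟩
  have hu' : u' ≠ 0 := fun h => hu₀ (congrArg Subtype.val h)
  have hker : Module.finrank K (LinearMap.ker A.mulVecLin) = 1 := by
    have hpos := (Module.finrank_pos_iff_exists_ne_zero (R := K)).mpr ⟨u', hu'⟩
    have hadd := A.mulVecLin.finrank_range_add_finrank_ker
    rw [← Matrix.rank, Module.finrank_pi] at hadd
    omega
  obtain ⟨a, ha⟩ := (finrank_eq_one_iff_of_nonzero' u' hu').mp hker ⟨v, hv⟩
  exact ⟨a, (congrArg Subtype.val ha).symm⟩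

lemma mulVec_apply_eq_head_add_tail {m : Type*} {n : ℕ} (M : Matrix m (Fin (n + 1)) K)
    (v : Fin (n + 1) → K) (i : m) :
    (M *ᵥ v) i = M i 0 * v 0 + (fun k => M i k.succ) ⬝ᵥ (v ∘ Fin.succ) := by
  simp only [mulVec, dotProduct, Fin.sum_univ_succ, Function.comp_apply]

theorem det_ne_zero_of_bordered {n : ℕ} {M : Matrix (Fin (n + 1)) (Fin (n + 1)) K}
    (hrank : n ≤ (M.submatrix Fin.succ Fin.succ).rank + 1) {u w : Fin n → K}
    (hu : M.submatrix Fin.succ Fin.succ *ᵥ u = 0) (hw : w ᵥ* M.submatrix Fin.succ Fin.succ = 0)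
    (hrow : (fun k => M 0 k.succ) ⬝ᵥ u ≠ 0) (hcol : w ⬝ᵥ (fun j => M j.succ 0) ≠ 0) :
    M.det ≠ 0 := by
  intro hdet
  obtain ⟨v, hv₀, hv⟩ := exists_mulVec_eq_zero_iff.mpr hdet
  have htail : v 0 • (fun j : Fin n => M j.succ 0) +
      M.submatrix Fin.succ Fin.succ *ᵥ (v ∘ Fin.succ) = 0 := by
    ext j
    have hj := congrFun hv j.succ
    rw [mulVec_apply_eq_head_add_tail, mul_comm] at hj
    exact hj
  have hhead : v 0 = 0 := by
    have hpair := congrArg (w ⬝ᵥ ·) htail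
    simp only [dotProduct_add, dotProduct_smul, dotProduct_mulVec, hw, zero_dotProduct,
      dotProduct_zero, add_zero, smul_eq_mul] at hpair
    exact (mul_eq_zero.mp hpair).resolve_right hcol
  rw [hhead, zero_smul, zero_add] at htail
  have hu₀ : u ≠ 0 := fun h => hrow (by rw [h, dotProduct_zero])
  obtain ⟨a, ha⟩ :=
    exists_eq_smul_of_mulVec_eq_zero (by rwa [Fintype.card_fin]) hu hu₀ htail
  have ha₀ : a = 0 := by
    have hfirst := congrFun hv 0
    rw [mulVec_apply_eq_head_add_tail, hhead, mul_zero, zero_add, ha, dotProduct_smul] at hfirst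
    exact (smul_eq_zero.mp hfirst).resolve_right hrow
  refine hv₀ (funext (Fin.cases hhead fun j => ?_))
  exact (congrFun ha j).trans (by rw [ha₀, zero_smul, Pi.zero_apply, Pi.zero_apply])

end BorderedMatrix

section Derivatives

variable {𝕜 E F G : Type*} [NontriviallyNormedField 𝕜] [NormedAddCommGroup E] [NormedSpace 𝕜 E]
  [NormedAddCommGroup F] [NormedSpace 𝕜 F] [NormedAddCommGroup G] [NormedSpace 𝕜 G]

lemma fderiv_smul_eq_of_map_smul {f : E → G} {s : 𝕜} (hs : s ≠ 0)
    (hf : ∀ x, f (s • x) = s • f x) (x : E) : fderiv 𝕜 f (s • x) = fderiv 𝕜 f x := by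
  have h : s • fderiv 𝕜 f (s • x) = s • fderiv 𝕜 f x := by
    have hfs : (f <| s • ·) = s • f := funext hf
    rw [← fderiv_comp_smul, hfs, fderiv_const_smul_field, Pi.smul_apply]
  exact smul_right_injective _ hs h

lemma fderiv_apply_mk_zero {f : E × F → G} {x : E} {y : F}
    (hf : DifferentiableAt 𝕜 f (x, y)) (a : E) :
    fderiv 𝕜 f (x, y) (a, 0) = fderiv 𝕜 (fun x' => f (x', y)) x a := by
  have h : HasFDerivAt (fun x' => f (x', y)) _ x :=
    hf.hasFDerivAt.comp x (hasFDerivAt_prodMk_left x y)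
  rw [h.fderiv, ContinuousLinearMap.comp_apply, ContinuousLinearMap.inl_apply]

lemma fderiv_apply_zero_mk {f : E × F → G} {x : E} {y : F}
    (hf : DifferentiableAt 𝕜 f (x, y)) (b : F) :
    fderiv 𝕜 f (x, y) (0, b) = fderiv 𝕜 (fun y' => f (x, y')) y b := by
  have h : HasFDerivAt (fun y' => f (x, y')) _ y :=
    hf.hasFDerivAt.comp y (hasFDerivAt_prodMk_right x y)
  rw [h.fderiv, ContinuousLinearMap.comp_apply, ContinuousLinearMap.inr_apply]

lemma eventually_differentiableAt_of_contDiffAt_two {f : E → G} {p : E}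
    (hf : ContDiffAt 𝕜 2 f p) : ∀ᶠ z in 𝓝 p, DifferentiableAt 𝕜 f z :=
  (hf.eventually (by simp)).mono fun _ hz => hz.differentiableAt two_ne_zero

lemma eventually_differentiableAt_mk_of_contDiffAt_two {f : E × F → G} {x : E} {y : F}
    (hf : ContDiffAt 𝕜 2 f (x, y)) : ∀ᶠ y' in 𝓝 y, DifferentiableAt 𝕜 f (x, y') :=
  (Continuous.prodMk_right x).continuousAt.eventually
    (eventually_differentiableAt_of_contDiffAt_two hf)

lemma differentiableAt_fderiv_of_contDiffAt_two {f : E → G} {p : E}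
    (hf : ContDiffAt 𝕜 2 f p) : DifferentiableAt 𝕜 (fderiv 𝕜 f) p :=
  (hf.fderiv_right (m := 1) (by norm_num)).differentiableAt one_ne_zero

lemma fderiv_fderiv_apply {f : E → G} {p : E} (hf : DifferentiableAt 𝕜 (fderiv 𝕜 f) p)
    (a b : E) :
    fderiv 𝕜 (fun z => fderiv 𝕜 f z a) p b = fderiv 𝕜 (fderiv 𝕜 f) p b a := by
  rw [fderiv_clm_apply hf (differentiableAt_const a)]
  simp

variable {X Y : Type*} [NormedAddCommGroup X] [NormedSpace 𝕜 X] [NormedAddCommGroup Y]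
  [NormedSpace 𝕜 Y]

lemma contDiffAt_slice_of_contDiffOn_ne_zero {m k : ℕ∞ω} {f : X × Y × E × F → G}
    (hf : ContDiffOn 𝕜 k f {p | p.2.2.2 ≠ 0}) (hmk : m ≤ k) (x : X) (y : Y) (e : E) {ξ : F}
    (hξ : ξ ≠ 0) : ContDiffAt 𝕜 m (fun w : E × F => f (x, y, w)) (e, ξ) := by
  have hopen : IsOpen {p : X × Y × E × F | p.2.2.2 ≠ 0} :=
    isOpen_ne_fun (by fun_prop) continuous_const
  have hat : ContDiffAt 𝕜 k f (x, y, e, ξ) := hf.contDiffAt (hopen.mem_nhds hξ)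
  exact (hat.of_le hmk).comp (e, ξ)
    (contDiffAt_const.prodMk (contDiffAt_const.prodMk contDiffAt_id))

end Derivatives

section Ray

variable {E F : Type*} [NormedAddCommGroup E] [NormedSpace ℝ E] [NormedAddCommGroup F]
  [NormedSpace ℝ F]

lemma fderiv_apply_self_eq_zero_of_const_on_ray {f : E → F} {x : E}
    (hf : ∀ s : ℝ, 0 < s → f (s • x) = f x) : fderiv ℝ f x x = 0 := by
  by_cases hd : DifferentiableAt ℝ f x
  · have hray : HasDerivAt (fun s : ℝ => s • x) x 1 := by
      simpa only [one_smul, id_eq] using (hasDerivAt_id (1 : ℝ)).smul_const x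
    have hcomp : HasDerivAt (fun s : ℝ => f (s • x)) (fderiv ℝ f x x) 1 :=
      hd.hasFDerivAt.comp_hasDerivAt_of_eq 1 hray (one_smul ℝ x).symm
    have hconst : (fun s : ℝ => f (s • x)) =ᶠ[𝓝 1] fun _ => f x :=
      (eventually_gt_nhds one_pos).mono hf
    exact hcomp.unique ((hasDerivAt_const 1 (f x)).congr_of_eventuallyEq hconst)
  · rw [fderiv_zero_of_not_differentiableAt hd, _root_.zero_apply]

end Ray

/-- The matrix of second derivatives `∂_{v k} ∂_{v j} f (p)` of `f` along a family of directions
`v`; for `v` a basis it is the Hessian matrix of `f` at `p` in the corresponding coordinates. -/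
def hessianMatrix {ι E : Type*} [NormedAddCommGroup E] [NormedSpace ℝ E] (f : E → ℝ) (v : ι → E)
    (p : E) : Matrix ι ι ℝ :=
  Matrix.of fun j k => fderiv ℝ (fun z => fderiv ℝ f z (v j)) p (v k)

section HessianMatrix

variable {ι E : Type*} [NormedAddCommGroup E] [NormedSpace ℝ E]

lemma hessianMatrix_isSymm {f : E → ℝ} {p : E} (hf : ContDiffAt ℝ 2 f p) (v : ι → E) :
    (hessianMatrix f v p).IsSymm := by
  ext j k
  simp only [hessianMatrix, transpose_apply, of_apply,
    fderiv_fderiv_apply (differentiableAt_fderiv_of_contDiffAt_two hf)]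
  exact hf.isSymmSndFDerivAt (by simp) (v j) (v k)

lemma hessianMatrix_add_continuousLinearMap {f : E → ℝ} {p : E}
    (hf : ∀ᶠ z in 𝓝 p, DifferentiableAt ℝ f z) (L : E →L[ℝ] ℝ) (v : ι → E) :
    hessianMatrix (fun z => f z + L z) v p = hessianMatrix f v p := by
  ext j k
  have hfirst : (fun z => fderiv ℝ (fun w => f w + L w) z (v j)) =ᶠ[𝓝 p]
      fun z => fderiv ℝ f z (v j) + L (v j) := by
    filter_upwards [hf] with z hz
    rw [fderiv_fun_add hz L.differentiableAt, L.fderiv, _root_.add_apply]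
  simp only [hessianMatrix, of_apply]
  rw [hfirst.fderiv_eq, fderiv_add_const]

lemma dotProduct_apply_single [Fintype ι] [DecidableEq ι] (L : EuclideanSpace ℝ ι →L[ℝ] ℝ)
    (ξ : EuclideanSpace ℝ ι) : (fun k => L (EuclideanSpace.single k 1)) ⬝ᵥ ξ.ofLp = L ξ := by
  conv_rhs => rw [← (EuclideanSpace.basisFun ι ℝ).sum_repr ξ]
  simp [dotProduct, mul_comm]

theorem hessianMatrix_mulVec_self_of_homogeneous [Fintype ι] [DecidableEq ι]
    {f : EuclideanSpace ℝ ι → ℝ} (hf : ∀ ξ, ∀ s : ℝ, 0 < s → f (s • ξ) = s * f ξ)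
    (ξ : EuclideanSpace ℝ ι) :
    hessianMatrix f (fun j => EuclideanSpace.single j 1) ξ *ᵥ ξ.ofLp = 0 := by
  ext j
  refine (dotProduct_apply_single _ ξ).trans (fderiv_apply_self_eq_zero_of_const_on_ray ?_)
  intro s hs
  rw [fderiv_smul_eq_of_map_smul hs.ne' fun η => hf η s hs]

end HessianMatrix

section TimeFrequency

variable {n : ℕ} {f : ℝ × EuclideanSpace ℝ (Fin n) → ℝ} {t : ℝ} {ξ : EuclideanSpace ℝ (Fin n)}

lemma hessianMatrix_txBasis_apply_succ (hf : ContDiffAt ℝ 2 f (t, ξ)) (i : Fin (n + 1))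
    (k : Fin n) : hessianMatrix f (txBasis n) (t, ξ) i k.succ =
      fderiv ℝ (fun η => fderiv ℝ f (t, η) (txBasis n i)) ξ (EuclideanSpace.single k 1) :=
  fderiv_apply_zero_mk ((differentiableAt_fderiv_of_contDiffAt_two hf).clm_apply
    (differentiableAt_const _)) _

lemma hessianMatrix_txBasis_submatrix_succ (hf : ContDiffAt ℝ 2 f (t, ξ)) :
    (hessianMatrix f (txBasis n) (t, ξ)).submatrix Fin.succ Fin.succ =
      hessianMatrix (fun η => f (t, η)) (fun j => EuclideanSpace.single j 1) ξ := by
  ext j k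
  have hspace : (fun η => fderiv ℝ f (t, η) (txBasis n j.succ)) =ᶠ[𝓝 ξ]
      fun η => fderiv ℝ (fun η' => f (t, η')) η (EuclideanSpace.single j 1) :=
    (eventually_differentiableAt_mk_of_contDiffAt_two hf).mono fun _ hη => fderiv_apply_zero_mk hη _
  rw [submatrix_apply, hessianMatrix_txBasis_apply_succ hf, hspace.fderiv_eq]
  rfl

lemma hessianMatrix_txBasis_zero_succ (hf : ContDiffAt ℝ 2 f (t, ξ)) (k : Fin n) :
    hessianMatrix f (txBasis n) (t, ξ) 0 k.succ =
      fderiv ℝ (fun η => deriv (fun s => f (s, η)) t) ξ (EuclideanSpace.single k 1) := by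
  have htime : (fun η => fderiv ℝ f (t, η) (txBasis n 0)) =ᶠ[𝓝 ξ]
      fun η => deriv (fun s => f (s, η)) t :=
    (eventually_differentiableAt_mk_of_contDiffAt_two hf).mono fun _ hη => fderiv_apply_mk_zero hη 1
  rw [hessianMatrix_txBasis_apply_succ hf, htime.fderiv_eq]

end TimeFrequency

theorem hessian_nondegenerate_general {n : ℕ} {f : ℝ × EuclideanSpace ℝ (Fin n) → ℝ} {t₀ : ℝ}
    {ξ₀ : EuclideanSpace ℝ (Fin n)} (hf : ContDiffAt ℝ 2 f (t₀, ξ₀))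
    (hhomog : ∀ ξ, ∀ s : ℝ, 0 < s → f (t₀, s • ξ) = s * f (t₀, ξ))
    (htrans : fderiv ℝ (fun ξ => deriv (fun t => f (t, ξ)) t₀) ξ₀ ξ₀ ≠ 0)
    (hrank : n ≤ (hessianMatrix (fun ξ => f (t₀, ξ))
      (fun j => EuclideanSpace.single j 1) ξ₀).rank + 1) :
    (hessianMatrix (fun w => f w + w.1) (txBasis n) (t₀, ξ₀)).det ≠ 0 := by
  set M := hessianMatrix f (txBasis n) (t₀, ξ₀)
  have hdrop : hessianMatrix (fun w => f w + w.1) (txBasis n) (t₀, ξ₀) = M :=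
    hessianMatrix_add_continuousLinearMap (eventually_differentiableAt_of_contDiffAt_two hf)
      (ContinuousLinearMap.fst ℝ ℝ _) _
  have hsymm : M.IsSymm := hessianMatrix_isSymm hf (txBasis n)
  have hblock : M.submatrix Fin.succ Fin.succ = hessianMatrix (fun ξ => f (t₀, ξ))
      (fun j => EuclideanSpace.single j 1) ξ₀ := hessianMatrix_txBasis_submatrix_succ hf
  have hker : M.submatrix Fin.succ Fin.succ *ᵥ ξ₀.ofLp = 0 :=
    hblock ▸ hessianMatrix_mulVec_self_of_homogeneous hhomog ξ₀
  have hrow : (fun k : Fin n => M 0 k.succ) ⬝ᵥ ξ₀.ofLp ≠ 0 := by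
    rwa [funext (hessianMatrix_txBasis_zero_succ hf), dotProduct_apply_single]
  rw [hdrop]
  refine det_ne_zero_of_bordered (hblock ▸ hrank) hker (w := ξ₀.ofLp) ?_ hrow ?_
  · rw [← mulVec_transpose, (hsymm.submatrix _).eq, hker]
  · rwa [dotProduct_comm, funext fun j : Fin n => hsymm.apply 0 j.succ]

/-- Nondegeneracy of the `(t,ξ)`-Hessian of `Φ = φ + t` at a
stationary point of a phase function which is homogeneous of degree one in `ξ`. -/
theorem hessian_nondegenerate
    (n : ℕ)
    (φ : EuclideanSpace ℝ (Fin n) → EuclideanSpace ℝ (Fin n) → ℝ →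
      EuclideanSpace ℝ (Fin n) → ℝ)
    -- `φ` is smooth (in all variables) where `ξ ≠ 0`
    (hsmooth : ContDiffOn ℝ (⊤ : ℕ∞)
      (fun p : EuclideanSpace ℝ (Fin n) × EuclideanSpace ℝ (Fin n) × ℝ ×
          EuclideanSpace ℝ (Fin n) => φ p.1 p.2.1 p.2.2.1 p.2.2.2)
      {p | p.2.2.2 ≠ 0})
    -- `φ` is positively homogeneous of degree one in `ξ`
    (hhomog : ∀ x y t ξ, ∀ s : ℝ, 0 < s → φ x y t (s • ξ) = s * φ x y t ξ)
    (x₀ y₀ : EuclideanSpace ℝ (Fin n)) (t₀ : ℝ) (ξ₀ : EuclideanSpace ℝ (Fin n))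
    (hξ₀ : ξ₀ ≠ 0)
    -- `∇_ξ φ = 0` at the base point
    (hcrit : fderiv ℝ (fun ξ => φ x₀ y₀ t₀ ξ) ξ₀ = 0)
    -- `⟨ξ₀/|ξ₀|, ∇_ξ⟩ ∂_t φ ≠ 0` at the base point
    (htrans : fderiv ℝ (fun ξ => deriv (fun t => φ x₀ y₀ t ξ) t₀) ξ₀ (‖ξ₀‖⁻¹ • ξ₀) ≠ 0)
    -- the `ξ`-Hessian of `φ` has rank `n - 1` at the base point
    (hrank :
      (Matrix.of fun j k : Fin n =>
          fderiv ℝ (fun ξ => fderiv ℝ (fun ξ' => φ x₀ y₀ t₀ ξ') ξ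
            (EuclideanSpace.single j 1)) ξ₀ (EuclideanSpace.single k 1)).rank = n - 1) :
    -- conclusion: the `(t,ξ)`-Hessian of `Φ(x₀,y₀,t,ξ) = φ(x₀,y₀,t,ξ) + t` is
    -- nondegenerate at `(t₀, ξ₀)`
    (Matrix.of fun j k : Fin (n + 1) =>
        fderiv ℝ (fun z : ℝ × EuclideanSpace ℝ (Fin n) =>
            fderiv ℝ (fun w : ℝ × EuclideanSpace ℝ (Fin n) => φ x₀ y₀ w.1 w.2 + w.1) z
              (txBasis n j))
          (t₀, ξ₀) (txBasis n k)).det ≠ 0 := by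
  exact hessian_nondegenerate_general
    (contDiffAt_slice_of_contDiffOn_ne_zero hsmooth (by norm_cast) x₀ y₀ t₀ hξ₀)
    (hhomog x₀ y₀ t₀) (fun h => htrans (by rw [map_smul, h, smul_zero]))
    (Nat.sub_le_iff_le_add.mp hrank.ge)

end
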